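/- Every balanced quadtree can be properly colored with 6 colors under corner adjacency; that is, for every balanced quadtree Q there exists a function f : Q → Fin 6 such that f(s) ≠ f(t) whenever s and t are corner-adjacent squares of Q. -/

import Mathlib

/-- A dyadic square `[i/2^k, (i+1)/2^k] × [j/2^k, (j+1)/2^k] ⊆ [0,1]²`,
recorded by its level `k` and coordinates `i, j < 2^k`. -/
structure DyadicSquare where
  k : ℕ
  i : ℕ
  j : ℕ
  hi : i < 2 ^ k
  hj : j < 2 ^ k
deriving DecidableEq

namespace DyadicSquare

/-- The subset of the plane occupied by a dyadic square. -/
def region (s : DyadicSquare) : Set (ℝ × ℝ) :=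
  Set.Icc ((s.i : ℝ) / 2 ^ s.k) (((s.i : ℝ) + 1) / 2 ^ s.k) ×ˢ
    Set.Icc ((s.j : ℝ) / 2 ^ s.k) (((s.j : ℝ) + 1) / 2 ^ s.k)

/-- Two squares are edge-adjacent if they are distinct and their intersection
contains more than one point (a segment of positive length). -/
def EdgeAdj (s t : DyadicSquare) : Prop :=
  s ≠ t ∧ (s.region ∩ t.region).Nontrivial

/-- Two squares are corner-adjacent if they are distinct and their intersection
is nonempty (they share at least a corner point or part of an edge). -/
def CornerAdj (s t : DyadicSquare) : Prop :=
  s ≠ t ∧ (s.region ∩ t.region).Nonempty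

end DyadicSquare

/-- A finite set of dyadic squares has pairwise disjoint interiors. -/
def PairwiseDisjointInteriors (Q : Finset DyadicSquare) : Prop :=
  (Q : Set DyadicSquare).Pairwise fun s t =>
    interior s.region ∩ interior t.region = ∅

/-- A quadtree: a finite set of dyadic squares with pairwise disjoint interiors
whose union is the unit square `[0,1]²`. -/
def IsQuadtree (Q : Finset DyadicSquare) : Prop :=
  PairwiseDisjointInteriors Q ∧
    (⋃ s ∈ Q, s.region) = Set.Icc (0 : ℝ) 1 ×ˢ Set.Icc (0 : ℝ) 1

/-- A quadtree is balanced if any two edge-adjacent squares have side lengths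
(`2^{-k}`) within a factor of two of each other. -/
def IsBalanced (Q : Finset DyadicSquare) : Prop :=
  ∀ s ∈ Q, ∀ t ∈ Q, DyadicSquare.EdgeAdj s t → s.k ≤ t.k + 1 ∧ t.k ≤ s.k + 1

/-!
Proof: order the squares lexicographically by their lower left corner and colour greedily.
In a balanced quadtree each square has at most five earlier corner-neighbours: every such
neighbour covers one of five fixed tiny cells around the left edge of the square.
-/

namespace DyadicSquare

/-- Scaled side length, at resolution `2^N`. -/
def sw (N : ℕ) (s : DyadicSquare) : ℤ := 2 ^ (N - s.k)

/-- Scaled left coordinate. -/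
def sx (N : ℕ) (s : DyadicSquare) : ℤ := s.i * sw N s

/-- Scaled bottom coordinate. -/
def sy (N : ℕ) (s : DyadicSquare) : ℤ := s.j * sw N s

/-- The unit cell `p` of the grid of resolution `2^N` lies in `s`. -/
def HasCell (N : ℕ) (s : DyadicSquare) (p : ℤ × ℤ) : Prop :=
  (sx N s ≤ p.1 ∧ p.1 < sx N s + sw N s) ∧ (sy N s ≤ p.2 ∧ p.2 < sy N s + sw N s)

theorem sw_pos (N : ℕ) (s : DyadicSquare) : 0 < sw N s := by
  unfold sw; positivity

theorem scale_lo {N k : ℕ} (h : k ≤ N) (i : ℕ) :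
    (i : ℝ) / 2 ^ k = (((i : ℤ) * 2 ^ (N - k) : ℤ) : ℝ) / 2 ^ N := by
  obtain ⟨d, rfl⟩ := Nat.exists_eq_add_of_le h
  rw [Nat.add_sub_cancel_left, pow_add]
  push_cast
  field_simp

theorem scale_hi {N k : ℕ} (h : k ≤ N) (i : ℕ) :
    ((i : ℝ) + 1) / 2 ^ k = (((i : ℤ) * 2 ^ (N - k) + 2 ^ (N - k) : ℤ) : ℝ) / 2 ^ N := by
  obtain ⟨d, rfl⟩ := Nat.exists_eq_add_of_le h
  rw [Nat.add_sub_cancel_left, pow_add]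
  push_cast
  field_simp

theorem region_eq {N : ℕ} {s : DyadicSquare} (h : s.k ≤ N) :
    s.region = Set.Icc ((sx N s : ℝ) / 2 ^ N) (((sx N s + sw N s : ℤ) : ℝ) / 2 ^ N) ×ˢ
      Set.Icc ((sy N s : ℝ) / 2 ^ N) (((sy N s + sw N s : ℤ) : ℝ) / 2 ^ N) := by
  unfold region sx sy sw
  rw [scale_lo h s.i, scale_hi h s.i, scale_lo h s.j, scale_hi h s.j]

theorem int_le_of_div {N : ℕ} {a b : ℤ} {p : ℝ} (h1 : (a : ℝ) / 2 ^ N ≤ p)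
    (h2 : p ≤ (b : ℝ) / 2 ^ N) : a ≤ b := by
  have h := h1.trans h2
  rw [div_le_div_iff_of_pos_right (by positivity)] at h
  exact_mod_cast h

theorem touch {N : ℕ} {s t : DyadicSquare} (hs : s.k ≤ N) (ht : t.k ≤ N)
    (h : (s.region ∩ t.region).Nonempty) :
    (sx N s ≤ sx N t + sw N t ∧ sx N t ≤ sx N s + sw N s) ∧
    (sy N s ≤ sy N t + sw N t ∧ sy N t ≤ sy N s + sw N s) := by
  obtain ⟨⟨x, y⟩, h1, h2⟩ := h
  rw [region_eq hs] at h1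
  rw [region_eq ht] at h2
  obtain ⟨⟨a1, a2⟩, a3, a4⟩ := h1
  obtain ⟨⟨b1, b2⟩, b3, b4⟩ := h2
  exact ⟨⟨int_le_of_div a1 b2, int_le_of_div b1 a2⟩,
    ⟨int_le_of_div a3 b4, int_le_of_div b3 a4⟩⟩

theorem mem_region {N : ℕ} {s : DyadicSquare} (hs : s.k ≤ N) {x y : ℤ}
    (h1 : sx N s ≤ x) (h2 : x ≤ sx N s + sw N s) (h3 : sy N s ≤ y)
    (h4 : y ≤ sy N s + sw N s) :
    ((x : ℝ) / 2 ^ N, (y : ℝ) / 2 ^ N) ∈ s.region := by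
  rw [region_eq hs]
  refine ⟨⟨?_, ?_⟩, ?_, ?_⟩ <;> dsimp only <;> gcongr

theorem mem_interior {N : ℕ} {s : DyadicSquare} (hs : s.k ≤ N) {p : ℤ × ℤ}
    (h : HasCell N s p) :
    (((p.1 : ℝ) + 1 / 2) / 2 ^ N, ((p.2 : ℝ) + 1 / 2) / 2 ^ N) ∈ interior s.region := by
  obtain ⟨⟨h1, h2⟩, h3, h4⟩ := h
  rw [region_eq hs, interior_prod_eq, interior_Icc, interior_Icc]
  have g1 : (sx N s : ℝ) ≤ p.1 := by exact_mod_cast h1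
  have g2 : (p.1 : ℝ) + 1 ≤ ((sx N s + sw N s : ℤ) : ℝ) := by exact_mod_cast h2
  have g3 : (sy N s : ℝ) ≤ p.2 := by exact_mod_cast h3
  have g4 : (p.2 : ℝ) + 1 ≤ ((sy N s + sw N s : ℤ) : ℝ) := by exact_mod_cast h4
  refine ⟨⟨?_, ?_⟩, ?_, ?_⟩ <;> dsimp only <;>
    refine div_lt_div_of_pos_right ?_ (by positivity) <;> linarith

/-- Squares overlapping in a left-edge segment are edge-adjacent. -/
theorem edge_of {N : ℕ} {s t : DyadicSquare} (hs : s.k ≤ N) (ht : t.k ≤ N) (hne : s ≠ t)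
    (h1 : sx N t ≤ sx N s) (h2 : sx N s ≤ sx N t + sw N t)
    (h3 : sy N s < sy N t + sw N t) (h4 : sy N t < sy N s + sw N s) : EdgeAdj s t := by
  have ps := sw_pos N s
  have pt := sw_pos N t
  refine ⟨hne, _, ⟨mem_region hs (x := sx N s) (y := max (sy N s) (sy N t)) ?_ ?_ ?_ ?_,
    mem_region ht ?_ ?_ ?_ ?_⟩, _,
    ⟨mem_region hs (x := sx N s) (y := min (sy N s + sw N s) (sy N t + sw N t)) ?_ ?_ ?_ ?_,
    mem_region ht ?_ ?_ ?_ ?_⟩, ?_⟩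
  any_goals omega
  intro h
  have h5 := (Prod.ext_iff.1 h).2
  dsimp only at h5
  rw [div_left_inj' (by positivity)] at h5
  have h6 : max (sy N s) (sy N t) = min (sy N s + sw N s) (sy N t + sw N t) := by
    exact_mod_cast h5
  omega

/-- An interval at least half as long, overlapping a dyadic interval, covers an end of it. -/
theorem covers_end {N : ℕ} {s t : DyadicSquare} (hs : s.k ≤ N) (ht : t.k ≤ N)
    (hk : t.k ≤ s.k + 1)
    (h3 : sy N s < sy N t + sw N t) (h4 : sy N t < sy N s + sw N s) :
    (sy N t ≤ sy N s ∧ sy N s < sy N t + sw N t) ∨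
    (sy N t ≤ sy N s + sw N s - 1 ∧ sy N s + sw N s - 1 < sy N t + sw N t) := by
  rcases Nat.lt_or_ge s.k t.k with h | h
  · have e : sw N s = 2 * sw N t := by
      unfold sw
      rw [← pow_succ']
      congr 1
      omega
    have pt := sw_pos N t
    unfold sy at *
    rw [e] at h3 h4 ⊢
    generalize sw N t = w at *
    have a1 : (2 * (s.j : ℤ)) < t.j + 1 := by nlinarith
    have a2 : (t.j : ℤ) < 2 * s.j + 2 := by nlinarith
    have a3 : (t.j : ℤ) = 2 * s.j ∨ (t.j : ℤ) = 2 * s.j + 1 := by omega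
    rcases a3 with a | a <;> rw [a]
    · left; constructor <;> nlinarith
    · right; constructor <;> nlinarith
  · have e : sw N s ≤ sw N t := by
      unfold sw
      exact pow_le_pow_right₀ (by norm_num) (by omega)
    omega

/-- The five test cells of a square. -/
def cells (N : ℕ) (s : DyadicSquare) : Finset (ℤ × ℤ) :=
  {(sx N s - 1, sy N s - 1), (sx N s - 1, sy N s), (sx N s - 1, sy N s + sw N s - 1),
    (sx N s - 1, sy N s + sw N s), (sx N s, sy N s - 1)}

end DyadicSquare

open DyadicSquare

theorem cell_unique {Q : Finset DyadicSquare} (hQ : PairwiseDisjointInteriors Q) {N : ℕ}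
    (hN : ∀ s ∈ Q, s.k ≤ N) {s t : DyadicSquare} (hs : s ∈ Q) (ht : t ∈ Q) {p : ℤ × ℤ}
    (h1 : HasCell N s p) (h2 : HasCell N t p) : s = t := by
  by_contra hne
  have h := hQ hs ht hne
  have : _ ∈ interior s.region ∩ interior t.region :=
    ⟨mem_interior (hN s hs) h1, mem_interior (hN t ht) h2⟩
  rw [h] at this
  exact this

theorem earlier_has_cell {Q : Finset DyadicSquare} (hQ : PairwiseDisjointInteriors Q)
    (hbal : IsBalanced Q) {N : ℕ} (hN : ∀ s ∈ Q, s.k ≤ N) {s t : DyadicSquare}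
    (hs : s ∈ Q) (ht : t ∈ Q) (hadj : CornerAdj s t)
    (hle : sx N t < sx N s ∨ sx N t = sx N s ∧ sy N t ≤ sy N s) :
    ∃ p ∈ cells N s, HasCell N t p := by
  have ps := sw_pos N s
  have pt := sw_pos N t
  obtain ⟨⟨a1, a2⟩, a3, a4⟩ := touch (hN s hs) (hN t ht) hadj.2
  rcases hle with hlt | ⟨hx, hy⟩
  · by_cases hlow : sy N t + sw N t = sy N s
    · refine ⟨(sx N s - 1, sy N s - 1), by simp [cells], ?_⟩
      refine ⟨⟨?_, ?_⟩, ?_, ?_⟩ <;> dsimp only <;> omega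
    by_cases hhigh : sy N t = sy N s + sw N s
    · refine ⟨(sx N s - 1, sy N s + sw N s), by simp [cells], ?_⟩
      refine ⟨⟨?_, ?_⟩, ?_, ?_⟩ <;> dsimp only <;> omega
    have b3 : sy N s < sy N t + sw N t := by omega
    have b4 : sy N t < sy N s + sw N s := by omega
    have he := edge_of (hN s hs) (hN t ht) hadj.1 hlt.le a1 b3 b4
    rcases covers_end (hN s hs) (hN t ht) (hbal s hs t ht he).2 b3 b4 with h | h
    · refine ⟨(sx N s - 1, sy N s), by simp [cells], ?_⟩
      refine ⟨⟨?_, ?_⟩, ?_, ?_⟩ <;> dsimp only <;> omega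
    · refine ⟨(sx N s - 1, sy N s + sw N s - 1), by simp [cells], ?_⟩
      refine ⟨⟨?_, ?_⟩, ?_, ?_⟩ <;> dsimp only <;> omega
  · by_cases hlow : sy N t + sw N t = sy N s
    · refine ⟨(sx N s, sy N s - 1), by simp [cells], ?_⟩
      refine ⟨⟨?_, ?_⟩, ?_, ?_⟩ <;> dsimp only <;> omega
    · refine absurd (cell_unique hQ hN hs ht (p := (sx N s, sy N s)) ?_ ?_) hadj.1
      · refine ⟨⟨?_, ?_⟩, ?_, ?_⟩ <;> dsimp only <;> omega
      · refine ⟨⟨?_, ?_⟩, ?_, ?_⟩ <;> dsimp only <;> omega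

theorem CornerAdj_symm {s t : DyadicSquare} (h : CornerAdj s t) : CornerAdj t s :=
  ⟨h.1.symm, by rw [Set.inter_comm]; exact h.2⟩

theorem exists_coloring {Q : Finset DyadicSquare} (hQ : PairwiseDisjointInteriors Q)
    (hbal : IsBalanced Q) {N : ℕ} (hN : ∀ s ∈ Q, s.k ≤ N) (S : Finset DyadicSquare) :
    S ⊆ Q → ∃ f : DyadicSquare → Fin 6,
      ∀ s ∈ S, ∀ t ∈ S, CornerAdj s t → f s ≠ f t := by
  classical
  induction S using Finset.induction_on_max_value
    (fun s : DyadicSquare => toLex (sx N s, sy N s)) with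
  | empty => exact fun _ => ⟨fun _ => 0, by simp⟩
  | insert a S ha hmax ih =>
    intro hsub
    have haQ : a ∈ Q := hsub (Finset.mem_insert_self a S)
    have hSQ : ∀ t ∈ S, t ∈ Q := fun t ht => hsub (Finset.mem_insert_of_mem ht)
    obtain ⟨f, hf⟩ := ih hSQ
    have hcell : ∀ t ∈ S.filter (fun t => CornerAdj a t), ∃ p ∈ cells N a, HasCell N t p := by
      intro t ht
      rw [Finset.mem_filter] at ht
      refine earlier_has_cell hQ hbal hN haQ (hSQ t ht.1) ht.2 ?_
      have := hmax t ht.1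
      rw [Prod.Lex.toLex_le_toLex] at this
      exact this
    have hcard : (S.filter (fun t => CornerAdj a t)).card ≤ 5 := by
      choose! g hg using hcell
      refine (Finset.card_le_card_of_injOn g (fun t ht => (hg t ht).1) ?_).trans
        (Finset.card_le_five (a := (sx N a - 1, sy N a - 1)))
      intro t ht u hu htu
      have h1 := (hg t ht).2
      have h2 := (hg u hu).2
      rw [← htu] at h2
      exact cell_unique hQ hN (hSQ t (Finset.mem_filter.1 ht).1)
        (hSQ u (Finset.mem_filter.1 hu).1) h1 h2
    obtain ⟨c, hc⟩ : ∃ c, c ∉ (S.filter (fun t => CornerAdj a t)).image f := by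
      by_contra! hall
      have h6 : (Finset.univ : Finset (Fin 6)).card ≤ 5 :=
        (Finset.card_le_card (fun c _ => hall c)).trans (Finset.card_image_le.trans hcard)
      simp at h6
    have key : ∀ t ∈ S, CornerAdj a t → f t ≠ c := fun t ht hadj h =>
      hc (Finset.mem_image.2 ⟨t, Finset.mem_filter.2 ⟨ht, hadj⟩, h⟩)
    have hne : ∀ t ∈ S, t ≠ a := fun t ht h => ha (h ▸ ht)
    refine ⟨Function.update f a c, ?_⟩
    intro s hs t ht hadj
    rcases Finset.mem_insert.1 hs with rfl | hs'
    · rcases Finset.mem_insert.1 ht with rfl | ht'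
      · exact absurd rfl hadj.1
      · rw [Function.update_self, Function.update_of_ne (hne t ht')]
        exact (key t ht' hadj).symm
    · rcases Finset.mem_insert.1 ht with rfl | ht'
      · rw [Function.update_self, Function.update_of_ne (hne s hs')]
        exact key s hs' (CornerAdj_symm hadj)
      · rw [Function.update_of_ne (hne s hs'), Function.update_of_ne (hne t ht')]
        exact hf s hs' t ht' hadj

/-- Every balanced quadtree can be properly 6-colored under corner adjacency. -/
theorem balanced_quadtree_six_colorable_corner (Q : Finset DyadicSquare)
    (hQ : IsQuadtree Q) (hbal : IsBalanced Q) :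
    ∃ f : DyadicSquare → Fin 6,
      ∀ s ∈ Q, ∀ t ∈ Q, DyadicSquare.CornerAdj s t → f s ≠ f t :=
  exists_coloring hQ.1 hbal (N := Q.sup DyadicSquare.k)
    (fun _ hs => Finset.le_sup (f := DyadicSquare.k) hs) Q (Finset.Subset.refl Q)
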